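/- Let H and F be graphs with chromatic numbers r+1 and s+1 respectively, where r > s ≥ 1, and suppose F is a complete (s+1)-partite graph. Then for every ε > 0 there exists N such that for all n ≥ N, every n-vertex graph with at least (1 - 1/s + ε)·C(n,2) edges contains either a copy of H as a subgraph or an induced copy of F. Equivalently, ex(n, {H, F-ind}) ≤ (1 - 1/s + ε)·C(n,2) for all sufficiently large n. -/

import Mathlib

open SimpleGraph Filter

/-- `G` contains a (not necessarily induced) copy of `H`: an injective graph homomorphism. -/
def ContainsCopy {α β : Type*} (H : SimpleGraph α) (G : SimpleGraph β) : Prop :=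
  ∃ f : H →g G, Function.Injective f

/-- `G` contains an induced copy of `F`: a graph embedding. -/
def ContainsInducedCopy {α β : Type*} (F : SimpleGraph α) (G : SimpleGraph β) : Prop :=
  Nonempty (F ↪g G)

/-- The induced Turán number `ex(n, {H, F-ind})`: the maximum number of edges in an
`n`-vertex graph with no copy of `H` and no induced copy of `F`. -/
noncomputable def inducedTuranNumber {α β : Type*} (H : SimpleGraph α) (F : SimpleGraph β)
    (n : ℕ) : ℕ :=
  sSup {m | ∃ G : SimpleGraph (Fin n),
    ¬ ContainsCopy H G ∧ ¬ ContainsInducedCopy F G ∧ m = G.edgeSet.ncard}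

/-- A graph is complete multipartite if its vertices can be assigned to parts so that
two vertices are adjacent iff they lie in different parts. -/
def IsCompleteMultipartite {α : Type*} (G : SimpleGraph α) : Prop :=
  ∃ (ι : Type) (f : α → ι), ∀ a b, G.Adj a b ↔ f a ≠ f b

/-- A graph is complete `k`-partite if its vertices can be partitioned into `k` (nonempty)
parts so that two vertices are adjacent iff they lie in different parts. -/
def IsCompleteMultipartiteWith {α : Type*} (G : SimpleGraph α) (k : ℕ) : Prop :=
  ∃ f : α → Fin k, Function.Surjective f ∧ ∀ a b, G.Adj a b ↔ f a ≠ f b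

/-!
By the minimum-degree Erdős–Stone theorem, deleting vertices of small degree shows that the
complete `(s + 1)`-partite graph with parts of any fixed size `t` has Turán density at most
`1 - 1 / s`, so a dense enough large graph contains a copy of it. For `t` at least a Ramsey
number, each part contains either a clique on `|V(H)|` vertices, in which `H` embeds, or an
independent set of size `|V(F)|`. If no part has such a clique, the independent sets form an
induced complete `(s + 1)`-partite graph with parts of size `|V(F)|`, which contains `F` as an
induced subgraph.
-/

section TuranDensity

open Topology

variable {W : Type*} {K : SimpleGraph W}

theorem tendsto_choose_succ_div_choose (k : ℕ) :
    Tendsto (fun n : ℕ ↦ ((n + 1).choose k / n.choose k : ℝ)) atTop (𝓝 1) := by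
  have hlim := (tendsto_add_atTop_iff_nat 1).mpr (tendsto_natCast_div_add_atTop (-k : ℝ))
  refine hlim.congr' ?_
  filter_upwards [eventually_ge_atTop k] with n hn
  have hpos : (0 : ℝ) < n.choose k := mod_cast Nat.choose_pos hn
  have hne : ((n + 1 : ℕ) : ℝ) + -k ≠ 0 := by
    rw [← sub_eq_add_neg, ← Nat.cast_sub (by lia)]
    exact mod_cast (by lia : n + 1 - k ≠ 0)
  rw [div_eq_div_iff hne hpos.ne', ← sub_eq_add_neg, ← Nat.cast_sub (by lia)]
  exact mod_cast (Nat.choose_mul_succ_eq n k ▸ mul_comm _ _)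

theorem tendsto_choose_atTop {k : ℕ} (hk : k ≠ 0) :
    Tendsto (fun n : ℕ ↦ (n.choose k : ℝ)) atTop atTop :=
  (isEquivalent_choose k).symm.tendsto_atTop <|
    ((tendsto_pow_atTop hk).comp tendsto_natCast_atTop_atTop).atTop_div_const (by positivity)

theorem extremalNumber_succ_le_add_of_minDegree {n : ℕ} {x : ℝ} (hx : 0 ≤ x)
    (h : ∀ (G : SimpleGraph (Fin (n + 1))) [DecidableRel G.Adj], x < G.minDegree → K ⊑ G) :
    (extremalNumber (n + 1) K : ℝ) ≤ extremalNumber n K + x := by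
  rw [← Fintype.card_fin (n + 1), extremalNumber_le_iff_of_nonneg K (by positivity)]
  intro G _ hfree
  obtain ⟨v, hv⟩ := G.exists_minimal_degree_vertex
  have hdegree : (G.degree v : ℝ) ≤ x := hv ▸ not_lt.mp (mt (h G) hfree)
  have hdelete : G.edgeFinset.card ≤ extremalNumber n K + G.degree v := by
    simpa only [card_edgeFinset_deleteIncidenceSet, Fintype.card_fin, Nat.add_sub_cancel,
      Nat.sub_le_iff_le_add] using card_edgeFinset_deleteIncidenceSet_le_extremalNumber hfree v
  grw [hdelete, Nat.cast_add, hdegree]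

theorem extremalNumber_le_of_minDegree {c : ℝ} (hc : 0 ≤ c) {m n : ℕ} (hmn : m ≤ n)
    (h : ∀ k > m, ∀ (G : SimpleGraph (Fin k)) [DecidableRel G.Adj],
      c * k < G.minDegree → K ⊑ G) :
    (extremalNumber n K : ℝ) ≤ c * (n + 1).choose 2 + extremalNumber m K := by
  induction n, hmn using Nat.le_induction with
  | base => exact le_add_of_nonneg_left (by positivity)
  | succ n hmn ih =>
    have hstep : (extremalNumber (n + 1) K : ℝ) ≤ extremalNumber n K + c * (n + 1 : ℕ) :=
      extremalNumber_succ_le_add_of_minDegree (by positivity) (h (n + 1) (by lia))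
    rw [Nat.choose_succ_succ' (n + 1) 1, Nat.choose_one_right, Nat.cast_add]
    linarith

theorem turanDensity_le_of_eventually_minDegree {c : ℝ} (hc : 0 ≤ c)
    (h : ∀ᶠ n in atTop, ∀ (G : SimpleGraph (Fin n)) [DecidableRel G.Adj],
      c * n < G.minDegree → K ⊑ G) :
    turanDensity K ≤ c := by
  obtain ⟨m, hm⟩ := eventually_atTop.mp h
  have hbound : ∀ᶠ n : ℕ in atTop, (extremalNumber n K / n.choose 2 : ℝ) ≤
      c * ((n + 1).choose 2 / n.choose 2) + extremalNumber m K / n.choose 2 := by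
    filter_upwards [eventually_ge_atTop m] with n hn
    rw [mul_div_assoc', ← add_div]
    gcongr
    exact extremalNumber_le_of_minDegree hc hn fun k hk ↦ hm k hk.le
  have hlim : Tendsto (fun n : ℕ ↦ (c * ((n + 1).choose 2 / n.choose 2) +
      extremalNumber m K / n.choose 2 : ℝ)) atTop (𝓝 c) := by
    simpa only [mul_one, add_zero] using ((tendsto_choose_succ_div_choose 2).const_mul c).add
      ((tendsto_choose_atTop two_ne_zero).const_div_atTop (extremalNumber m K : ℝ))
  exact le_of_tendsto_of_tendsto (tendsto_turanDensity K) hlim hbound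

theorem turanDensity_completeEquipartiteGraph_le (r t : ℕ) :
    turanDensity (completeEquipartiteGraph (r + 1) t) ≤ 1 - 1 / r := by
  refine le_of_forall_pos_le_add fun ε hε ↦ turanDensity_le_of_eventually_minDegree ?_ ?_
  · exact add_nonneg (Nat.one_sub_one_div_cast_nonneg r) hε.le
  · filter_upwards [eventually_completeEquipartiteGraph_isContained_of_minDegree hε r t]
      with n hn G _ hG using hn hG.le

end TuranDensity

section Ramsey

variable {V : Type*} {G : SimpleGraph V}

theorem card_lt_choose_of_cliqueFreeOn {a b : ℕ} {S : Finset V}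
    (ha : G.CliqueFreeOn S a) (hb : Gᶜ.CliqueFreeOn S b) : S.card < (a + b).choose a := by
  classical
  induction a generalizing b S with
  | zero => exact (ha (by simp) (isNClique_empty.mpr rfl)).elim
  | succ a iha =>
    induction b generalizing S with
    | zero => exact (hb (by simp) (isNClique_empty.mpr rfl)).elim
    | succ b ihb =>
      obtain rfl | ⟨v, hv⟩ := S.eq_empty_or_nonempty
      · exact Nat.choose_pos (by lia)
      let A : Finset V := {w ∈ S | G.Adj v w}
      let B : Finset V := {w ∈ S | Gᶜ.Adj v w}
      have hA : (A : Set V) = ↑S ∩ G.neighborSet v := Finset.coe_filter _ _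
      have hB : (B : Set V) = ↑S ∩ Gᶜ.neighborSet v := Finset.coe_filter _ _
      have hA_card : A.card < (a + (b + 1)).choose a :=
        iha (hA ▸ ha.of_succ _ hv) (hb.subset _ (hA ▸ Set.inter_subset_left))
      have hB_card : B.card < (a + 1 + b).choose (a + 1) :=
        ihb (ha.subset _ (hB ▸ Set.inter_subset_left)) (hB ▸ hb.of_succ _ hv)
      have hS : S ⊆ insert v (A ∪ B) := fun w hw ↦ by
        simp only [A, B, Finset.mem_insert, Finset.mem_union, Finset.mem_filter, compl_adj]
        tauto
      have hS_card : S.card ≤ A.card + B.card + 1 := by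
        grw [hS, Finset.card_insert_le, Finset.card_union_le]
      have hpascal : (a + 1 + (b + 1)).choose (a + 1) =
          (a + (b + 1)).choose a + (a + 1 + b).choose (a + 1) := by
        rw [show a + 1 + b = a + (b + 1) by lia, ← Nat.choose_succ_succ',
          show a + 1 + (b + 1) = a + (b + 1) + 1 by lia]
      lia

theorem top_isIndContained_or_bot_isIndContained [Fintype V] (G : SimpleGraph V) {a b : ℕ}
    (h : (a + b).choose a ≤ Fintype.card V) :
    completeGraph (Fin a) ⊴ G ∨ emptyGraph (Fin b) ⊴ G := by
  have hclique : completeGraph (Fin a) ⊴ G ↔ ¬ G.CliqueFree a := by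
    rw [not_cliqueFree_iff_top_isContained, top_isIndContained_iff_top_isContained]
  have hindep : emptyGraph (Fin b) ⊴ G ↔ ¬ Gᶜ.CliqueFree b := by
    rw [not_cliqueFree_iff_top_isContained, ← top_isIndContained_iff_top_isContained,
      ← compl_isIndContained_compl, compl_bot]
  rw [hclique, hindep]
  by_contra! hfree
  exact h.not_gt <| card_lt_choose_of_cliqueFreeOn (S := Finset.univ)
    hfree.1.cliqueFreeOn hfree.2.cliqueFreeOn

end Ramsey

section CompleteMultipartite

variable {V : Type*} {G : SimpleGraph V}

theorem completeGraph_isContained_or_completeEquipartiteGraph_isIndContained {k a b : ℕ}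
    (h : completeEquipartiteGraph k ((a + b).choose a) ⊑ G) :
    completeGraph (Fin a) ⊑ G ∨ completeEquipartiteGraph k b ⊴ G := by
  obtain ⟨f⟩ := h
  let part (i : Fin k) : Fin ((a + b).choose a) ↪ V :=
    ⟨fun j ↦ f (i, j), f.injective.comp (Prod.mk_right_injective i)⟩
  by_cases hclique : ∃ i, completeGraph (Fin a) ⊴ G.comap (part i)
  · obtain ⟨i, hi⟩ := hclique
    exact .inl (hi.trans ⟨Embedding.comap (part i) G⟩).isContained
  right
  have hindep (i : Fin k) : emptyGraph (Fin b) ⊴ G.comap (part i) :=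
    (top_isIndContained_or_bot_isIndContained _ (by simp)).resolve_left fun h ↦ hclique ⟨i, h⟩
  let e (i : Fin k) := (hindep i).some
  have hinj : Function.Injective fun x : Fin k × Fin b ↦ f (x.1, e x.1 x.2) := by
    rintro ⟨i, x⟩ ⟨j, y⟩ hxy
    obtain ⟨rfl : i = j, hxy⟩ := Prod.mk.inj (f.injective hxy)
    exact congrArg (i, ·) ((e i).injective hxy)
  refine ⟨⟨⟨_, hinj⟩, fun {x y} ↦ ⟨?_, fun hxy ↦ f.toHom.map_adj hxy⟩⟩⟩
  obtain ⟨i, x⟩ := x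
  obtain ⟨j, y⟩ := y
  rintro hadj (rfl : i = j)
  exact (e i).map_adj_iff.mp hadj

variable {β : Type*} {F : SimpleGraph β}

theorem IsCompleteMultipartiteWith.isIndContained_completeEquipartiteGraph [Fintype β] {k : ℕ}
    (hF : IsCompleteMultipartiteWith F k) :
    F ⊴ completeEquipartiteGraph k (Fintype.card β) := by
  obtain ⟨p, -, hp⟩ := hF
  have hinj : Function.Injective fun b ↦ (p b, Fintype.equivFin β b) := fun a b hab ↦
    (Fintype.equivFin β).injective (Prod.mk.inj hab).2
  exact ⟨⟨⟨_, hinj⟩, fun {a b} ↦ (hp a b).symm⟩⟩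

end CompleteMultipartite

section InducedTuran

variable {α β : Type*} {H : SimpleGraph α} {F : SimpleGraph β}

theorem containsCopy_iff_isContained {V : Type*} {G : SimpleGraph V} :
    ContainsCopy H G ↔ H ⊑ G :=
  ⟨fun ⟨f, hf⟩ ↦ ⟨⟨f, hf⟩⟩, fun ⟨f⟩ ↦ ⟨f.toHom, f.injective⟩⟩

theorem inducedTuranNumber_le_of_nonneg {n : ℕ} {x : ℝ} (hx : 0 ≤ x)
    (h : ∀ G : SimpleGraph (Fin n),
      x < G.edgeSet.ncard → ContainsCopy H G ∨ ContainsInducedCopy F G) :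
    (inducedTuranNumber H F n : ℝ) ≤ x := by
  rw [← Nat.le_floor_iff hx]
  refine csSup_le' ?_
  rintro _ ⟨G, hH, hF, rfl⟩
  rw [Nat.le_floor_iff hx]
  by_contra! hlt
  exact (h G hlt).elim hH hF

theorem containsCopy_or_containsInducedCopy [Fintype α] [Fintype β] {V : Type*}
    {G : SimpleGraph V} {k : ℕ} (hF : IsCompleteMultipartiteWith F k)
    (h : completeEquipartiteGraph k
      ((Fintype.card α + Fintype.card β).choose (Fintype.card α)) ⊑ G) :
    ContainsCopy H G ∨ ContainsInducedCopy F G := by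
  have hH : H ⊑ completeGraph (Fin (Fintype.card α)) :=
    (IsContained.of_le le_top).trans (Iso.completeGraph (Fintype.equivFin α)).isContained
  exact (completeGraph_isContained_or_completeEquipartiteGraph_isIndContained h).imp
    (containsCopy_iff_isContained.mpr <| hH.trans ·)
    hF.isIndContained_completeEquipartiteGraph.trans

end InducedTuran

theorem inducedTuran_upper_bound_general {α β : Type*} [Finite α] [Finite β]
    (H : SimpleGraph α) (F : SimpleGraph β) {s : ℕ} (hs : 1 ≤ s)
    (hF : IsCompleteMultipartiteWith F (s + 1)) {ε : ℝ} (hε : 0 < ε) :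
    ∀ᶠ n : ℕ in atTop,
      (∀ G : SimpleGraph (Fin n),
        (1 - 1 / (s : ℝ) + ε) * (n.choose 2 : ℝ) ≤ (G.edgeSet.ncard : ℝ) →
        ContainsCopy H G ∨ ContainsInducedCopy F G) ∧
      (inducedTuranNumber H F n : ℝ) ≤ (1 - 1 / (s : ℝ) + ε) * (n.choose 2 : ℝ) := by
  classical
  have := Fintype.ofFinite α
  have := Fintype.ofFinite β
  let t := (Fintype.card α + Fintype.card β).choose (Fintype.card α)
  have hs_inv : 1 / (s : ℝ) ≤ 1 := div_le_one_of_le₀ (mod_cast hs) (by positivity)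
  filter_upwards [eventually_isContained_of_card_edgeFinset (completeEquipartiteGraph (s + 1) t) hε]
    with n hn
  have hcopies (G : SimpleGraph (Fin n))
      (hG : (1 - 1 / (s : ℝ) + ε) * n.choose 2 ≤ G.edgeSet.ncard) :
      ContainsCopy H G ∨ ContainsInducedCopy F G := by
    refine containsCopy_or_containsInducedCopy hF (hn ?_)
    grw [turanDensity_completeEquipartiteGraph_le s t, hG, ← coe_edgeFinset, Set.ncard_coe_finset]
  have hnonneg : 0 ≤ (1 - 1 / (s : ℝ) + ε) * n.choose 2 := mul_nonneg (by linarith) (by positivity)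
  exact ⟨hcopies, inducedTuranNumber_le_of_nonneg hnonneg fun G hG ↦ hcopies G hG.le⟩

/-- If `χ(H) = r+1`, `χ(F) = s+1`, `r > s ≥ 1` and `F` is complete `(s+1)`-partite, then for
every `ε > 0` and all sufficiently large `n`, every `n`-vertex graph with at least
`(1 - 1/s + ε) * C(n,2)` edges contains a copy of `H` or an induced copy of `F`;
equivalently, `ex(n, {H, F-ind}) ≤ (1 - 1/s + ε) * C(n,2)`. -/
theorem inducedTuran_upper_bound
    {α β : Type*} [Fintype α] [Fintype β] (H : SimpleGraph α) (F : SimpleGraph β)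
    (r s : ℕ) (hs : 1 ≤ s) (hsr : s < r)
    (hH : H.chromaticNumber = (r + 1 : ℕ)) (hF : F.chromaticNumber = (s + 1 : ℕ))
    (hFmp : IsCompleteMultipartiteWith F (s + 1)) :
    ∀ ε : ℝ, 0 < ε → ∃ N : ℕ, ∀ n : ℕ, N ≤ n →
      (∀ G : SimpleGraph (Fin n),
        (1 - 1 / (s : ℝ) + ε) * (n.choose 2 : ℝ) ≤ (G.edgeSet.ncard : ℝ) →
        ContainsCopy H G ∨ ContainsInducedCopy F G) ∧
      (inducedTuranNumber H F n : ℝ) ≤ (1 - 1 / (s : ℝ) + ε) * (n.choose 2 : ℝ) :=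
  fun _ hε ↦ eventually_atTop.mp (inducedTuran_upper_bound_general H F hs hFmp hε)
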